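/- arXiv:1411.5305 — 2 statements merged into one kernel-verified Lean document; each statement's English description precedes it below -/
import Mathlib

section
/- For k ≥ 2 and u > 0, (2π)^{−k/2} ∫_{B_k(√u)} (∂⁶/∂z₁⁶) exp(−|z|²/2) dz = 15·(−2u/k + 4u²/(k(k+2)) − 2u³/(k(k+2)(k+4))) · u^{k/2−1} exp(−u/2) / (2^{k/2} Γ(k/2)). -/
open MeasureTheory Real

namespace Stmt9Aux

lemma polar (n : ℕ) (i : Fin (n+1)) (m : ℕ) : ∃ C : ℝ, ∀ g : ℝ → ℝ,
    ∫ x : Fin (n+1) → ℝ, x i ^ m * g (√(∑ j, x j ^ 2)) =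
      C * ∫ r in Set.Ioi (0:ℝ), r ^ (n + m) * g r := by
  refine ⟨∫ θ, (θ.1 i) ^ m ∂(volume : Measure (EuclideanSpace ℝ (Fin (n+1)))).toSphere, fun g => ?_⟩
  have h0 : ∫ x : Fin (n+1) → ℝ, x i ^ m * g (√(∑ j, x j ^ 2)) =
      ∫ x : EuclideanSpace ℝ (Fin (n+1)), x i ^ m * g ‖x‖ := by
    rw [← (PiLp.volume_preserving_toLp (Fin (n+1))).integral_comp
      (MeasurableEquiv.toLp 2 _).measurableEmbedding]
    simp [EuclideanSpace.norm_eq]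
  rw [h0]
  set μ := (volume : Measure (EuclideanSpace ℝ (Fin (n+1))))
  haveI : MeasurableSingletonClass (EuclideanSpace ℝ (Fin (n+1))) := 
    ⟨fun x => isClosed_singleton.measurableSet⟩
  have hd : Module.finrank ℝ (EuclideanSpace ℝ (Fin (n+1))) - 1 = n := by simp
  calc ∫ x : EuclideanSpace ℝ (Fin (n+1)), x i ^ m * g ‖x‖
    _ = ∫ x : ({(0)}ᶜ : Set (EuclideanSpace ℝ (Fin (n+1)))), (x.1 i) ^ m * g (‖x.1‖) ∂(μ.comap (↑)) := by
      rw [integral_subtype_comap isOpen_compl_singleton.measurableSet (fun x : EuclideanSpace ℝ (Fin (n+1)) ↦ x i ^ m * g (‖x‖)),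
        restrict_compl_singleton]
    _ = ∫ x, (x.1.1 i ^ m) * (x.2.1 ^ m * g x.2.1) ∂μ.toSphere.prod (.volumeIoiPow n) := by
      have := μ.measurePreserving_homeomorphUnitSphereProd.integral_comp
        (Homeomorph.measurableEmbedding _) (fun x => (x.1.1 i ^ m) * (x.2.1 ^ m * g x.2.1))
      rw [hd] at this
      rw [← this]
      refine integral_congr_ae (Filter.Eventually.of_forall fun x => ?_)
      have hx : ‖x.1‖ ≠ 0 := norm_ne_zero_iff.2 x.2
      simp
      field_simp
      rw [div_pow]
      field_simp
    _ = (∫ θ, (θ.1 i) ^ m ∂μ.toSphere) * ∫ r : Set.Ioi (0 : ℝ), (r.1 ^ m * g r.1) ∂.volumeIoiPow n :=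
      integral_prod_mul (fun θ : Metric.sphere (0 : EuclideanSpace ℝ (Fin (n+1))) 1 => θ.1 i ^ m)
        (fun r : Set.Ioi (0 : ℝ) => (r.1 ^ m * g r.1))
    _ = _ := by
      congr 1
      simp only [Measure.volumeIoiPow, ENNReal.ofReal]
      rw [integral_withDensity_eq_integral_smul,
        integral_subtype_comap measurableSet_Ioi fun a ↦ Real.toNNReal (a ^ n) • (a ^ m * g a),
        setIntegral_congr_fun measurableSet_Ioi fun x hx ↦ ?_]
      · rw [NNReal.smul_def, Real.coe_toNNReal _ (pow_nonneg hx.out.le _), smul_eq_mul]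
        ring
      · exact (measurable_subtype_coe.pow_const _).real_toNNReal

noncomputable def A (n : ℕ) : ℝ := ∫ r in Set.Ioi (0:ℝ), r ^ n * exp (-r ^ 2 / 2)

lemma A_eq (n : ℕ) : A n = 2 ^ (((n:ℝ) + 1) / 2 - 1) * Gamma (((n:ℝ) + 1) / 2) := by
  have h := integral_rpow_mul_exp_neg_mul_rpow (p := 2) (q := n) (b := 1/2) (by norm_num)
    (by have : (0:ℝ) ≤ n := n.cast_nonneg
        linarith) (by norm_num)
  have e : A n = ∫ x in Set.Ioi (0 : ℝ), x ^ (n:ℝ) * exp (-(1/2) * x ^ (2:ℝ)) := by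
    unfold A
    refine setIntegral_congr_fun measurableSet_Ioi fun x hx ↦ ?_
    simp only [rpow_natCast, rpow_ofNat]
    congr 2
    ring
  rw [e, h]
  congr 1
  rw [rpow_sub (by norm_num), one_div (2:ℝ), inv_rpow (by norm_num), ← rpow_neg (by norm_num), rpow_one]
  rw [neg_div, neg_neg]
  ring

lemma A_pos (n : ℕ) : 0 < A n := by
  rw [A_eq]
  have : 0 < Gamma (((n:ℝ) + 1) / 2) := Gamma_pos_of_pos (by positivity)
  positivity

lemma A_rec (n : ℕ) : A (n + 2) = (n + 1) * A n := by
  rw [A_eq, A_eq]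
  have : (((n + 2 : ℕ):ℝ) + 1) / 2 = ((n:ℝ) + 1) / 2 + 1 := by push_cast; ring
  rw [this, Gamma_add_one (by positivity), add_sub_right_comm, rpow_add (by norm_num), rpow_one]
  ring

lemma A_zero : 2 * A 0 = √(2 * π) := by
  rw [A_eq]
  norm_num [Gamma_one_half_eq]
  rw [rpow_neg (by norm_num), ← sqrt_eq_rpow]
  have : √2 * √2 = (2:ℝ) := mul_self_sqrt (by norm_num)
  field_simp
  linarith

lemma line (j : ℕ) : ∫ x : ℝ, x ^ (2 * j) * exp (-x ^ 2 / 2) = 2 * A (2 * j) := by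
  unfold A
  rw [← integral_comp_abs (f := fun r => r ^ (2 * j) * exp (-r ^ 2 / 2))]
  simp [pow_mul]

lemma whole (n : ℕ) (i : Fin (n+1)) (j : ℕ) :
    ∫ x : Fin (n+1) → ℝ, x i ^ (2 * j) * exp (-(√(∑ j, x j ^ 2)) ^ 2 / 2) =
      2 * A (2 * j) * √(2 * π) ^ n := by
  have := integral_fintype_prod_volume_eq_prod (𝕜 := ℝ)
    (fun (l : Fin (n+1)) (x : ℝ) => (if l = i then x ^ (2 * j) else 1) * exp (-x ^ 2 / 2))
  have e : ∀ x : Fin (n+1) → ℝ, x i ^ (2 * j) * exp (-(√(∑ j, x j ^ 2)) ^ 2 / 2) =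
      ∏ l, ((if l = i then x l ^ (2 * j) else 1) * exp (-x l ^ 2 / 2)) := by
    intro x
    rw [Finset.prod_mul_distrib, Finset.prod_ite_eq' Finset.univ i (fun l => x l ^ (2*j)), ← exp_sum,
      sq_sqrt (Finset.sum_nonneg fun _ _ => sq_nonneg _)]
    simp [neg_div, Finset.sum_div]
  simp_rw [e]
  rw [this, ← Finset.mul_prod_erase _ _ (Finset.mem_univ i)]
  simp only [if_true, line]
  congr 1
  rw [Finset.prod_congr rfl (g := fun _ => √(2 * π))]
  · simp
  · intro l hl
    have h := line 0
    simp only [mul_zero, pow_zero, A_zero] at h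
    simpa [Finset.ne_of_mem_erase hl] using h

noncomputable def J (u : ℝ) (n : ℕ) : ℝ := ∫ r in (0:ℝ)..√u, r ^ n * exp (-r ^ 2 / 2)

lemma J_rec (u : ℝ) (hu : 0 < u) (n : ℕ) :
    J u (n + 2) = (n + 1) * J u n - √u ^ (n + 1) * exp (-u / 2) := by
  have h : ∀ x ∈ Set.uIcc 0 (√u), HasDerivAt (fun r : ℝ => r ^ (n+1) * exp (-r ^ 2 / 2))
      ((n+1) * (x ^ n * exp (-x ^ 2 / 2)) - x ^ (n+2) * exp (-x ^ 2 / 2)) x := by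
    intro x _
    have h1 := hasDerivAt_pow (n+1) x
    have h2 := ((((hasDerivAt_pow 2 x).neg).div_const 2).exp)
    refine (h1.mul h2).congr_deriv ?_
    simp
    ring
  have := intervalIntegral.integral_eq_sub_of_hasDerivAt h
    (Continuous.intervalIntegrable (by fun_prop) _ _)
  rw [intervalIntegral.integral_sub (Continuous.intervalIntegrable (by fun_prop) _ _)
    (Continuous.intervalIntegrable (by fun_prop) _ _), intervalIntegral.integral_const_mul] at this
  simp only [sq_sqrt hu.le] at this
  simp at this
  unfold J
  linarith

lemma ball_mom (n : ℕ) (i : Fin (n+1)) (j : ℕ) (u : ℝ) (hu : 0 < u) :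
    A (n + 2 * j) * ∫ x in {x : Fin (n+1) → ℝ | ∑ l, x l ^ 2 ≤ u},
      x i ^ (2 * j) * exp (-(∑ l, x l ^ 2) / 2) =
      2 * A (2 * j) * √(2 * π) ^ n * J u (n + 2 * j) := by
  obtain ⟨C, hC⟩ := polar n i (2 * j)
  have h1 := hC (fun r => exp (-r ^ 2 / 2))
  rw [whole] at h1
  have h2 := hC (Set.indicator (Set.Iic (√u)) fun r => exp (-r ^ 2 / 2))
  have hm : MeasurableSet {x : Fin (n+1) → ℝ | ∑ l, x l ^ 2 ≤ u} :=
    measurableSet_le (by fun_prop) (by fun_prop)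
  have e1 : ∫ x in {x : Fin (n+1) → ℝ | ∑ l, x l ^ 2 ≤ u},
      x i ^ (2 * j) * exp (-(∑ l, x l ^ 2) / 2) = C * J u (n + 2 * j) := by
    rw [← integral_indicator hm]
    convert h2 using 1
    · refine integral_congr_ae (Filter.Eventually.of_forall fun x => ?_)
      have hs : 0 ≤ ∑ l, x l ^ 2 := Finset.sum_nonneg fun _ _ => sq_nonneg _
      by_cases hx : ∑ l, x l ^ 2 ≤ u
      · have : √(∑ l, x l ^ 2) ≤ √u := sqrt_le_sqrt hx
        simp [Set.indicator, hx, this, sq_sqrt hs]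
      · have : ¬ √(∑ l, x l ^ 2) ≤ √u := by rwa [sqrt_le_sqrt_iff hu.le]
        simp [Set.indicator, hx, this]
    · congr 1
      unfold J
      rw [intervalIntegral.integral_of_le (sqrt_nonneg u), ← Set.Ioi_inter_Iic,
        ← setIntegral_indicator measurableSet_Iic]
      refine setIntegral_congr_fun measurableSet_Ioi fun x hx ↦ ?_
      by_cases h : x ≤ √u <;> simp [Set.indicator, h]
  rw [e1, h1]
  unfold A
  ring

lemma deriv_six (x : ℝ) : iteratedDeriv 6 (fun y : ℝ => exp (-(y ^ 2 / 2))) x =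
    (x ^ 6 - 15 * x ^ 4 + 45 * x ^ 2 - 15) * exp (-(x ^ 2 / 2)) := by
  rw [iteratedDeriv_eq_iterate, Polynomial.deriv_gaussian_eq_hermite_mul_gaussian]
  simp [Polynomial.hermite_succ]
  ring

lemma integrand (n : ℕ) (i : Fin (n+1)) (z : Fin (n+1) → ℝ) :
    iteratedDeriv 6 (fun t => Real.exp (-(∑ l, Function.update z i t l ^ 2) / 2)) (z i) =
    z i ^ (2 * 3) * exp (-(∑ l, z l ^ 2) / 2) - 15 * (z i ^ (2 * 2) * exp (-(∑ l, z l ^ 2) / 2))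
     + 45 * (z i ^ (2 * 1) * exp (-(∑ l, z l ^ 2) / 2)) - 15 * (z i ^ (2 * 0) * exp (-(∑ l, z l ^ 2) / 2)) := by
  have e : (fun t => Real.exp (-(∑ l, Function.update z i t l ^ 2) / 2)) =
      fun t => exp (-(∑ l ∈ Finset.univ.erase i, z l ^ 2) / 2) * exp (-(t ^ 2 / 2)) := by
    funext t
    rw [← Finset.add_sum_erase _ _ (Finset.mem_univ i), ← exp_add]
    rw [Finset.sum_congr rfl (g := fun l => z l ^ 2)]
    · simp; ring
    · intro l hl
      simp [Finset.ne_of_mem_erase hl]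
  rw [e, iteratedDeriv_const_mul_field, deriv_six]
  have e2 : exp (-(∑ l, z l ^ 2) / 2) =
      exp (-(∑ l ∈ Finset.univ.erase i, z l ^ 2) / 2) * exp (-(z i ^ 2 / 2)) := by
    rw [← Finset.add_sum_erase _ _ (Finset.mem_univ i), ← exp_add]
    ring_nf
  rw [e2]
  ring

lemma integrable_mom (n : ℕ) (i : Fin (n+1)) (j : ℕ) (u : ℝ) :
    IntegrableOn (fun x : Fin (n+1) → ℝ => x i ^ (2 * j) * exp (-(∑ l, x l ^ 2) / 2))
      {x : Fin (n+1) → ℝ | ∑ l, x l ^ 2 ≤ u} := by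
  refine ContinuousOn.integrableOn_compact ?_ (by fun_prop)
  refine Metric.isCompact_of_isClosed_isBounded (isClosed_le (by fun_prop) (by fun_prop)) ?_
  refine (Metric.isBounded_closedBall (x := (0 : Fin (n+1) → ℝ)) (r := √u)).subset fun x hx => ?_
  rw [mem_closedBall_zero_iff, pi_norm_le_iff_of_nonneg (sqrt_nonneg _)]
  intro l
  rw [norm_eq_abs]
  refine abs_le_sqrt (le_trans ?_ hx)
  exact Finset.single_le_sum (f := fun l => x l ^ 2) (fun _ _ => sq_nonneg _) (Finset.mem_univ l)

end Stmt9Aux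

open Stmt9Aux in
theorem stmt9 (k : ℕ) (hk : 2 ≤ k) (u : ℝ) (hu : 0 < u) :
    (2 * Real.pi) ^ (-(k : ℝ) / 2) *
        ∫ z in {z : Fin k → ℝ | ∑ i, z i ^ 2 ≤ u},
          iteratedDeriv 6
            (fun t => Real.exp (-(∑ i, Function.update z ⟨0, by omega⟩ t i ^ 2) / 2))
            (z ⟨0, by omega⟩) =
      15 * (-(2 * u / k) + 4 * u ^ 2 / (k * (k + 2)) -
          2 * u ^ 3 / (k * (k + 2) * (k + 4))) *
        (u ^ ((k : ℝ) / 2 - 1) * Real.exp (-u / 2) /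
          (2 ^ ((k : ℝ) / 2) * Real.Gamma ((k : ℝ) / 2))) := by
  obtain ⟨n, rfl⟩ : ∃ n, k = n + 1 := ⟨k - 1, by omega⟩
  have hz : (⟨0, by omega⟩ : Fin (n+1)) = 0 := rfl
  simp only [hz, integrand]
  have I := fun j => integrable_mom n 0 j u
  have B := fun j => ball_mom n 0 j u hu
  rw [integral_sub (by exact (((I 3).sub ((I 2).const_mul 15)).add ((I 1).const_mul 45)))
      (by exact (I 0).const_mul 15),
    integral_add (by exact (I 3).sub ((I 2).const_mul 15)) (by exact (I 1).const_mul 45),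
    integral_sub (by exact I 3) (by exact (I 2).const_mul 15),
    integral_const_mul, integral_const_mul, integral_const_mul]
  have B0 := B 0
  have B1 := B 1
  have B2 := B 2
  have B3 := B 3
  generalize (∫ x in {x : Fin (n+1) → ℝ | ∑ l, x l ^ 2 ≤ u},
      x 0 ^ (2 * 0) * exp (-(∑ l, x l ^ 2) / 2)) = P0 at *
  generalize (∫ x in {x : Fin (n+1) → ℝ | ∑ l, x l ^ 2 ≤ u},
      x 0 ^ (2 * 1) * exp (-(∑ l, x l ^ 2) / 2)) = P1 at *
  generalize (∫ x in {x : Fin (n+1) → ℝ | ∑ l, x l ^ 2 ≤ u},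
      x 0 ^ (2 * 2) * exp (-(∑ l, x l ^ 2) / 2)) = P2 at *
  generalize (∫ x in {x : Fin (n+1) → ℝ | ∑ l, x l ^ 2 ≤ u},
      x 0 ^ (2 * 3) * exp (-(∑ l, x l ^ 2) / 2)) = P3 at *
  clear B I
  have a1 : A 2 = A 0 := by have := A_rec 0; norm_num at this; exact this
  have a2 : A 4 = 3 * A 0 := by have := A_rec 2; norm_num [a1] at this; exact this
  have a3 : A 6 = 15 * A 0 := by have := A_rec 4; norm_num [a2] at this; linarith
  have b1 := A_rec n
  have b2 := A_rec (n + 2)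
  have b3 := A_rec (n + 4)
  have j1 := J_rec u hu n
  have j2 := J_rec u hu (n + 2)
  have j3 := J_rec u hu (n + 4)
  have hA := A_pos n
  have hAe := A_eq n
  set K : ℝ := (n : ℝ) + 1 with hK
  have hKpos : 0 < K := by positivity
  have r0 : √u ^ (n + 1) = u * u ^ (K / 2 - 1) := by
    rw [← rpow_natCast, sqrt_eq_rpow, ← rpow_mul hu.le, rpow_sub hu, rpow_one]
    push_cast
    rw [← hK]
    field_simp
  have r1 : √u ^ (n + 2 + 1) = u ^ 2 * u ^ (K / 2 - 1) := by
    rw [show n + 2 + 1 = n + 1 + 2 by ring, pow_add, r0, sq_sqrt hu.le]; ring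
  have r2 : √u ^ (n + 4 + 1) = u ^ 3 * u ^ (K / 2 - 1) := by
    rw [show n + 4 + 1 = n + 1 + 2 + 2 by ring, pow_add, pow_add, r0, sq_sqrt hu.le]; ring
  have c0 : (2 * A 0) * √(2 * π) ^ n = (2 * π) ^ (K / 2) := by
    rw [A_zero, ← pow_succ', ← rpow_natCast, sqrt_eq_rpow, ← rpow_mul (by positivity)]
    push_cast
    rw [← hK]
    congr 1
    ring
  have hg : (2:ℝ) ^ (K / 2) * Gamma (K / 2) = 2 * A n := by
    rw [hAe, rpow_sub (by norm_num), rpow_one]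
    ring
  have hcast : ((n + 1 : ℕ) : ℝ) = K := by push_cast; rfl
  rw [hcast, hg, neg_div, rpow_neg (by positivity), ← c0]
  rw [r0] at j1
  rw [r1] at j2
  rw [r2] at j3
  have hK2 : ((n + 2 : ℕ) : ℝ) + 1 = K + 2 := by push_cast; rw [hK]; ring
  have hK4 : ((n + 4 : ℕ) : ℝ) + 1 = K + 4 := by push_cast; rw [hK]; ring
  rw [hK2] at b2 j2
  rw [hK4] at b3 j3
  norm_num only [add_assoc, a1, a2, a3, add_zero] at b1 b2 b3 j1 j2 j3 B0 B1 B2 B3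
  rw [b2, b1] at b3
  rw [b1] at b2
  rw [j2, j1] at j3
  rw [j1] at j2
  rw [b3, j3] at B3
  rw [b2, j2] at B2
  rw [b1, j1] at B1
  have hD : 0 < 2 * A 0 * √(2 * π) ^ n := by rw [c0]; positivity
  have hD' : 2 * (3 * A 0) * √(2 * π) ^ n = 3 * (2 * A 0 * √(2 * π) ^ n) := by ring
  have hD'' : 2 * (15 * A 0) * √(2 * π) ^ n = 15 * (2 * A 0 * √(2 * π) ^ n) := by ring
  rw [hD'] at B2
  rw [hD''] at B3
  generalize 2 * A 0 * √(2 * π) ^ n = D at *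
  generalize A n = a at *
  generalize J u n = j at *
  generalize exp (-u / 2) = E at *
  generalize u ^ (K / 2 - 1) = p at *
  have q0 : P0 = D * j / a := by field_simp; linarith
  have q1 : P1 = D * (K * j - u * p * E) / (K * a) := by field_simp; linarith
  have q2 : P2 = 3 * D * ((K + 2) * (K * j - u * p * E) - u ^ 2 * p * E) / ((K + 2) * (K * a)) := by
    field_simp; linarith
  have q3 : P3 = 15 * D * ((K + 4) * ((K + 2) * (K * j - u * p * E) - u ^ 2 * p * E) - u ^ 3 * p * E) /
      ((K + 4) * ((K + 2) * (K * a))) := by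
    field_simp; linarith
  rw [q0, q1, q2, q3]
  field_simp
  ring
end

section
/- For k ≥ 3 and u > 0, (2π)^{−k/2} ∫_{B_k(√u)} (∂²/∂z₁²)(∂²/∂z₂²)(∂²/∂z₃²) exp(−|z|²/2) dz = (−2u/k + 4u²/(k(k+2)) − 2u³/(k(k+2)(k+4))) · u^{k/2−1} exp(−u/2) / (2^{k/2} Γ(k/2)). -/
open MeasureTheory Real

lemma d2 (c x : ℝ) : iteratedDeriv 2 (fun t : ℝ => c * Real.exp (-(t^2)/2)) x = c * ((x^2-1) * Real.exp (-(x^2)/2)) := by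
  have h0 : ∀ t : ℝ, HasDerivAt (fun t : ℝ => Real.exp (-(t^2)/2)) (-t * Real.exp (-(t^2)/2)) t := by
    intro t
    have h := ((((hasDerivAt_id t).pow 2).neg.div_const 2).exp)
    refine h.congr_deriv ?_
    simp
    ring
  have h1 : deriv (fun t : ℝ => c * Real.exp (-(t^2)/2)) = fun t => c * (-t * Real.exp (-(t^2)/2)) := by
    funext t
    exact ((h0 t).const_mul c).deriv
  rw [iteratedDeriv_succ, iteratedDeriv_one, h1]
  refine ((((hasDerivAt_id x).neg).mul (h0 x)).const_mul c).deriv.trans ?_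
  simp
  left
  ring

lemma integrand_eq (k : ℕ) (a b c : Fin k) (hab : a ≠ b) (hac : a ≠ c) (hbc : b ≠ c) (z : Fin k → ℝ) :
   iteratedDeriv 2
            (fun w => iteratedDeriv 2
              (fun s => iteratedDeriv 2
                (fun t => Real.exp
                  (-(∑ i, Function.update (Function.update (Function.update z c w) b s) a t i ^ 2) / 2))
                (z a))
              (z b))
            (z c) = (z a^2-1)*(z b^2-1)*(z c^2-1) * Real.exp (-(∑ i, z i^2)/2) := by
  let R : ℝ := ∑ i ∈ ((Finset.univ.erase a).erase b).erase c, z i ^ 2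
  have hsum : ∀ f : Fin k → ℝ, ∑ i, f i = f a + (f b + (f c + ∑ i ∈ ((Finset.univ.erase a).erase b).erase c, f i)) := by
    intro f
    rw [← Finset.add_sum_erase Finset.univ f (Finset.mem_univ a),
      ← Finset.add_sum_erase (Finset.univ.erase a) f (a := b) (by simp [hab.symm]),
      ← Finset.add_sum_erase ((Finset.univ.erase a).erase b) f (a := c) (by simp [hac.symm, hbc.symm])]
  have hs : ∀ w s t : ℝ, ∑ i, Function.update (Function.update (Function.update z c w) b s) a t i ^ 2 = t^2 + (s^2 + (w^2 + R)) := by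
    intro w s t
    rw [hsum]
    have : ∑ i ∈ ((Finset.univ.erase a).erase b).erase c, Function.update (Function.update (Function.update z c w) b s) a t i ^ 2 = R := by
      apply Finset.sum_congr rfl
      intro i hi
      simp only [Finset.mem_erase, Finset.mem_univ, and_true] at hi
      rw [Function.update_of_ne hi.2.2, Function.update_of_ne hi.2.1, Function.update_of_ne hi.1]
    rw [this]
    simp [Function.update_of_ne, hab.symm, hac.symm, hbc.symm]
  have e1 : ∀ w s : ℝ, (fun t => Real.exp (-(∑ i, Function.update (Function.update (Function.update z c w) b s) a t i ^ 2) / 2)) = fun t => Real.exp (-(s^2 + (w^2 + R))/2) * Real.exp (-(t^2)/2) := by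
    intro w s; funext t
    rw [hs, ← Real.exp_add]; congr 1; ring
  simp only [e1, d2]
  have e2 : ∀ w : ℝ, (fun s => Real.exp (-(s^2 + (w^2 + R))/2) * ((z a^2-1) * Real.exp (-(z a^2)/2))) = fun s => (Real.exp (-(w^2 + R)/2) * ((z a^2-1) * Real.exp (-(z a^2)/2))) * Real.exp (-(s^2)/2) := by
    intro w; funext s
    rw [show -(s^2 + (w^2 + R))/2 = -(w^2+R)/2 + -(s^2)/2 by ring, Real.exp_add]; ring
  simp only [e2, d2]
  have e3 : (fun w => Real.exp (-(w^2 + R)/2) * ((z a^2-1) * Real.exp (-(z a^2)/2)) * ((z b^2-1) * Real.exp (-(z b^2)/2))) = fun w => (Real.exp (-R/2) * ((z a^2-1) * Real.exp (-(z a^2)/2)) * ((z b^2-1) * Real.exp (-(z b^2)/2))) * Real.exp (-(w^2)/2) := by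
    funext w
    rw [show -(w^2 + R)/2 = -R/2 + -(w^2)/2 by ring, Real.exp_add]; ring
  simp only [e3, d2]
  rw [hsum, show -(z a ^ 2 + (z b ^ 2 + (z c ^ 2 + R))) / 2 = -R/2 + -(z a^2)/2 + -(z b^2)/2 + -(z c^2)/2 by ring, Real.exp_add, Real.exp_add, Real.exp_add]
  ring

lemma polar_pi (k : ℕ) (hk : 3 ≤ k) (s : Finset (Fin k)) :
    ∃ C : ℝ, ∀ g : ℝ → ℝ, ∫ z : Fin k → ℝ, (∏ i ∈ s, z i ^ 2) * g (√(∑ i, z i ^ 2))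
      = C * ∫ r in Set.Ioi (0:ℝ), r ^ (k - 1 + 2 * s.card) * g r := by
  have : Nonempty (Fin k) := ⟨⟨0, by omega⟩⟩
  let P : (EuclideanSpace ℝ (Fin k)) → ℝ := fun x => ∏ i ∈ s, x i ^ 2
  have hdim : Module.finrank ℝ (EuclideanSpace ℝ (Fin k)) = k := by simp
  refine ⟨∫ x, P x.1 ∂(volume : Measure (EuclideanSpace ℝ (Fin k))).toSphere, fun g => ?_⟩
  have hP : ∀ x : (EuclideanSpace ℝ (Fin k)), x ≠ 0 → P x = P (‖x‖⁻¹ • x) * ‖x‖ ^ (2 * s.card) := by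
    intro x hx
    have : ‖x‖ ≠ 0 := by simpa using hx
    simp only [P, PiLp.smul_apply, smul_eq_mul, mul_pow, Finset.prod_mul_distrib, Finset.prod_const]
    rw [pow_mul, mul_right_comm, ← mul_pow, ← mul_pow, inv_mul_cancel₀ this]
    simp
  calc ∫ z : Fin k → ℝ, (∏ i ∈ s, z i ^ 2) * g (√(∑ i, z i ^ 2))
      = ∫ x : (EuclideanSpace ℝ (Fin k)), P x * g ‖x‖  := by
        rw [← (PiLp.volume_preserving_toLp (Fin k)).integral_comp
          (MeasurableEquiv.toLp 2 _).measurableEmbedding]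
        simp [P, EuclideanSpace.norm_eq]
    _ = ∫ x : ({(0)}ᶜ : Set (EuclideanSpace ℝ (Fin k))), P x.1 * g (‖x.1‖) ∂((volume : Measure (EuclideanSpace ℝ (Fin k))).comap (↑)) := by
      rw [integral_subtype_comap (measurableSet_singleton _).compl fun x ↦ P x * g (‖x‖),
        restrict_compl_singleton]
    _ = ∫ x, P x.1 * (x.2.1 ^ (2 * s.card) * g x.2) ∂(volume : Measure (EuclideanSpace ℝ (Fin k))).toSphere.prod (.volumeIoiPow (Module.finrank ℝ (EuclideanSpace ℝ (Fin k)) - 1)) := by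
      rw [← (volume : Measure (EuclideanSpace ℝ (Fin k))).measurePreserving_homeomorphUnitSphereProd.integral_comp
        (Homeomorph.measurableEmbedding _)]
      apply integral_congr_ae
      filter_upwards with x
      rw [hP x.1 x.2]
      simp [mul_assoc]
    _ = (∫ x, P x.1 ∂(volume : Measure (EuclideanSpace ℝ (Fin k))).toSphere) * ∫ x : Set.Ioi (0 : ℝ), (x.1 ^ (2 * s.card) * g x) ∂.volumeIoiPow (Module.finrank ℝ (EuclideanSpace ℝ (Fin k)) - 1) :=
      integral_prod_mul (fun x : Metric.sphere (0:(EuclideanSpace ℝ (Fin k))) 1 => P x.1) (fun x : Set.Ioi (0 : ℝ) => x.1 ^ (2 * s.card) * g x)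
    _ = _ := by
      congr 1
      simp only [Measure.volumeIoiPow, ENNReal.ofReal]
      rw [integral_withDensity_eq_integral_smul,
        integral_subtype_comap measurableSet_Ioi fun a ↦ Real.toNNReal (a ^ (Module.finrank ℝ (EuclideanSpace ℝ (Fin k)) - 1)) • (a ^ (2 * s.card) * g a),
        setIntegral_congr_fun measurableSet_Ioi fun x hx ↦ ?_]
      · rw [NNReal.smul_def, Real.coe_toNNReal _ (pow_nonneg hx.out.le _), hdim, pow_add, smul_eq_mul, mul_assoc]
      · exact (measurable_subtype_coe.pow_const _).real_toNNReal

lemma radial (m : ℕ) : ∫ r in Set.Ioi (0:ℝ), r ^ m * Real.exp (-(r^2)/2) = 2 ^ (((m:ℝ)+1)/2 - 1) * Real.Gamma (((m:ℝ)+1)/2) := by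
  have h := integral_rpow_mul_exp_neg_mul_rpow (p := 2) (q := m) (b := 1/2) (by norm_num) (by
    have : (0:ℝ) ≤ m := by positivity
    linarith) (by norm_num)
  rw [show (1/2:ℝ) ^ (-((m:ℝ)+1)/2) * (1/2) = 2 ^ (((m:ℝ)+1)/2 - 1) by
    rw [Real.rpow_sub (by norm_num), one_div, Real.inv_rpow (by norm_num), ← Real.rpow_neg (by norm_num), Real.rpow_one]
    rw [show -(-((m:ℝ)+1)/2) = ((m:ℝ)+1)/2 by ring]; ring] at h
  rw [← h]
  apply setIntegral_congr_fun measurableSet_Ioi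
  intro x hx
  simp only
  rw [Real.rpow_natCast, Real.rpow_two]
  congr 2; ring

lemma radial_pos (m : ℕ) : 0 < ∫ r in Set.Ioi (0:ℝ), r ^ m * Real.exp (-(r^2)/2) := by
  rw [radial]
  have : 0 < Real.Gamma (((m:ℝ)+1)/2) := Real.Gamma_pos_of_pos (by positivity)
  positivity

lemma gauss0 : ∫ x : ℝ, Real.exp (-(x^2)/2) = √(2*π) := by
  have := integral_gaussian (1/2)
  rw [show √(2*π) = √(π/(1/2)) by congr 1; ring, ← this]
  congr; funext x; congr 1; ring

lemma gauss2 : ∫ x : ℝ, x^2 * Real.exp (-(x^2)/2) = √(2*π) := by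
  have h := integral_comp_abs (f := fun x => x^2 * Real.exp (-(x^2)/2))
  have h0 := integral_comp_abs (f := fun x => x^0 * Real.exp (-(x^2)/2))
  rw [radial] at h h0
  simp only [sq_abs] at h h0
  simp only [pow_zero, one_mul, gauss0] at h0
  rw [h, h0]
  rw [show (((2:ℕ):ℝ)+1)/2 - 1 = 1/2 by norm_num, show (((2:ℕ):ℝ)+1)/2 = 1/2+1 by norm_num, Real.Gamma_add_one (by norm_num),
    show (((0:ℕ):ℝ)+1)/2 - 1 = 1/2 - 1 by norm_num, Real.rpow_sub_one (by norm_num)]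
  norm_num; ring

lemma gaussN (k : ℕ) (s : Finset (Fin k)) :
    ∫ z : Fin k → ℝ, (∏ i ∈ s, z i ^ 2) * Real.exp (-(√(∑ i, z i ^ 2)^2)/2) = (2*π) ^ ((k:ℝ)/2) := by
  have h := integral_fintype_prod_volume_eq_prod (𝕜 := ℝ) (ι := Fin k) (E := fun _ => ℝ)
    (fun i x => (if i ∈ s then x^2 else 1) * Real.exp (-(x^2)/2))
  have h1 : ∀ i : Fin k, ∫ x : ℝ, (if i ∈ s then x^2 else 1) * Real.exp (-(x^2)/2) = √(2*π) := by
    intro i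
    split_ifs
    · exact gauss2
    · simpa using gauss0
  simp only [h1, Finset.prod_const, Finset.card_univ, Fintype.card_fin] at h
  rw [show (2*π) ^ ((k:ℝ)/2) = √(2*π)^k by
    rw [Real.sqrt_eq_rpow, ← Real.rpow_natCast, ← Real.rpow_mul (by positivity)]; congr 1; ring]
  rw [← h]
  congr; funext z
  rw [Real.sq_sqrt (Finset.sum_nonneg fun i _ => sq_nonneg _), Finset.prod_mul_distrib, ← Real.exp_sum]
  congr 1
  · simp [Finset.prod_ite_mem]
  · congr 1
    simp [neg_div, Finset.sum_div]

/-- truncated moments -/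
lemma moment (k : ℕ) (hk : 3 ≤ k) (u : ℝ) (hu : 0 < u) (s : Finset (Fin k)) :
    ∫ z in {z : Fin k → ℝ | ∑ i, z i ^ 2 ≤ u}, (∏ i ∈ s, z i ^ 2) * Real.exp (-(∑ i, z i ^ 2)/2)
     = (2*π) ^ ((k:ℝ)/2) * ((∫ r in (0:ℝ)..√u, r ^ (k - 1 + 2 * s.card) * Real.exp (-(r^2)/2)) /
        (2 ^ ((k:ℝ)/2 + s.card - 1) * Real.Gamma ((k:ℝ)/2 + s.card))) := by
  obtain ⟨C, hC⟩ := polar_pi k hk s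
  have h1 := hC (fun r => Real.exp (-(r^2)/2))
  rw [gaussN] at h1
  have hpos := radial_pos (k - 1 + 2 * s.card)
  have hr := radial (k - 1 + 2 * s.card)
  rw [show (((k - 1 + 2 * s.card : ℕ):ℝ)+1)/2 = (k:ℝ)/2 + s.card by
    push_cast [Nat.cast_sub (show 1 ≤ k by omega)]; ring] at hr
  have h2 := hC ((Set.Iic (√u)).indicator (fun r => Real.exp (-(r^2)/2)))
  have hm : MeasurableSet {z : Fin k → ℝ | ∑ i, z i ^ 2 ≤ u} :=
    measurableSet_le (by fun_prop) (by fun_prop)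
  rw [← integral_indicator hm]
  have e : ({z : Fin k → ℝ | ∑ i, z i ^ 2 ≤ u}.indicator fun z => (∏ i ∈ s, z i ^ 2) * Real.exp (-(∑ i, z i ^ 2)/2))
     = fun z => (∏ i ∈ s, z i ^ 2) * (Set.Iic (√u)).indicator (fun r => Real.exp (-(r^2)/2)) (√(∑ i, z i ^ 2)) := by
    funext z
    have h0 : 0 ≤ ∑ i, z i ^ 2 := Finset.sum_nonneg fun i _ => sq_nonneg _
    by_cases hz : ∑ i, z i ^ 2 ≤ u
    · have : √(∑ i, z i ^ 2) ≤ √u := Real.sqrt_le_sqrt hz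
      rw [Set.indicator_of_mem (by exact hz), Set.indicator_of_mem (by exact this), Real.sq_sqrt h0]
    · have : ¬ √(∑ i, z i ^ 2) ≤ √u := by
        rwa [Real.sqrt_le_sqrt_iff hu.le]
      rw [Set.indicator_of_notMem (by exact hz), Set.indicator_of_notMem (by exact this), mul_zero]
  rw [e, h2, h1, ← hr]
  have e2 : ∫ r in Set.Ioi (0:ℝ), r ^ (k - 1 + 2 * s.card) * (Set.Iic (√u)).indicator (fun r => Real.exp (-(r^2)/2)) r
      = ∫ r in (0:ℝ)..√u, r ^ (k - 1 + 2 * s.card) * Real.exp (-(r^2)/2) := by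
    rw [intervalIntegral.integral_of_le (Real.sqrt_nonneg u), ← Set.Ioi_inter_Iic,
      ← setIntegral_indicator measurableSet_Iic]
    congr; funext r
    by_cases h : r ∈ Set.Iic (√u)
    · simp only [Set.indicator_of_mem h]
    · simp only [Set.indicator_of_notMem h, mul_zero]
  rw [e2]
  generalize (∫ r in (0:ℝ)..√u, r ^ (k - 1 + 2 * s.card) * Real.exp (-(r^2)/2)) = A
  have := hpos.ne'
  rw [mul_assoc, mul_div_cancel₀ _ this]

lemma ftc (k : ℕ) (hk : 3 ≤ k) (u : ℝ) (hu : 0 < u) (J : ℕ → ℝ)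
   (hJ : ∀ m, J m = ∫ r in (0:ℝ)..√u, r ^ m * Real.exp (-(r^2)/2)) :
   J (k-1+2*3) / (k * (k+2) * (k+4)) - 3 * J (k-1+2*2) / (k*(k+2)) + 3 * J (k-1+2*1) / k - J (k-1+2*0)
   = (-(2 * u / k) + 4 * u ^ 2 / (k * (k + 2)) -
          2 * u ^ 3 / (k * (k + 2) * (k + 4))) *
        (u ^ ((k : ℝ) / 2 - 1) * Real.exp (-u / 2)) / 2 := by
  have hk0 : (0:ℝ) < k := by positivity
  have step : ∀ m : ℕ, 1 ≤ m → (m:ℝ) * J (m-1) - J (m+1) = (√u)^m * Real.exp (-u/2) := by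
    intro m hm
    rw [hJ, hJ, ← intervalIntegral.integral_const_mul, ← intervalIntegral.integral_sub]
    · have := intervalIntegral.integral_eq_sub_of_hasDerivAt (a := 0) (b := √u)
        (f := fun r : ℝ => r^m * Real.exp (-(r^2)/2))
        (f' := fun r : ℝ => (m:ℝ) * (r^(m-1) * Real.exp (-(r^2)/2)) - r^(m+1) * Real.exp (-(r^2)/2)) ?_ ?_
      · rw [this, Real.sq_sqrt hu.le, zero_pow (by omega)]; simp
      · intro x _
        have h := (hasDerivAt_pow m x).mul ((((hasDerivAt_id x).pow 2).neg.div_const 2).exp)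
        refine h.congr_deriv ?_
        simp
        ring
      · apply Continuous.intervalIntegrable; fun_prop
    · apply Continuous.intervalIntegrable; fun_prop
    · apply Continuous.intervalIntegrable; fun_prop
  have hp : (√u)^k = u ^ ((k:ℝ)/2 - 1) * u := by
    rw [← Real.rpow_add_one hu.ne', Real.sqrt_eq_rpow, ← Real.rpow_natCast, ← Real.rpow_mul hu.le]
    congr 1; ring
  have s0 := step k (by omega)
  have s1 := step (k+2) (by omega)
  have s2 := step (k+4) (by omega)
  rw [pow_add, show (√u)^4 = (√u^2)^2 by ring, Real.sq_sqrt hu.le, hp] at s2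
  rw [pow_add, Real.sq_sqrt hu.le, hp] at s1
  rw [hp] at s0
  rw [show k+2-1 = k+1 by omega] at s1
  rw [show k+4-1 = k+3 by omega] at s2
  rw [show k-1+2*3 = k+4+1 by omega, show k-1+2*2 = k+3 by omega, show k-1+2*1=k+1 by omega, show k-1+2*0=k-1 by omega]
  rw [show k+2+1 = k+3 by omega] at s1
  push_cast at s1 s2
  have t0 : J (k-1) = (J (k+1) + u ^ ((k:ℝ)/2 - 1) * u * Real.exp (-u/2)) / k := by
    rw [eq_div_iff (by positivity)]; linarith
  have t1 : J (k+1) = (J (k+3) + u ^ ((k:ℝ)/2 - 1) * u * u * Real.exp (-u/2)) / (k+2) := by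
    rw [eq_div_iff (by positivity)]; linarith
  have t2 : J (k+3) = (J (k+4+1) + u ^ ((k:ℝ)/2 - 1) * u * u^2 * Real.exp (-u/2)) / (k+4) := by
    rw [eq_div_iff (by positivity)]; linarith
  rw [t0, t1, t2]
  field_simp
  ring

/-- normalised truncated moments, with the Gamma factors unrolled -/
lemma gamma_step (x : ℝ) (hx : 0 < x) : 2 ^ (x + 1 - 1) * Real.Gamma (x + 1) = (2 * x) * (2 ^ (x - 1) * Real.Gamma x) := by
  rw [Real.Gamma_add_one hx.ne', show x + 1 - 1 = (x - 1) + 1 by ring, Real.rpow_add_one (by norm_num)]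
  ring

lemma final_int (k : ℕ) (hk : 3 ≤ k) (u : ℝ) (hu : 0 < u) (a b c : Fin k) (hab : a ≠ b) (hac : a ≠ c) (hbc : b ≠ c)
   (J : ℕ → ℝ) (hJ : ∀ m, J m = ∫ r in (0:ℝ)..√u, r ^ m * Real.exp (-(r^2)/2)) :
   ∫ z in {z : Fin k → ℝ | ∑ i, z i ^ 2 ≤ u}, (z a^2-1)*(z b^2-1)*(z c^2-1) * Real.exp (-(∑ i, z i^2)/2)
   = (2*π) ^ ((k:ℝ)/2) * ((J (k-1+2*3) / (k * (k+2) * (k+4)) - 3 * J (k-1+2*2) / (k*(k+2)) + 3 * J (k-1+2*1) / k - J (k-1+2*0))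
      / (2 ^ ((k:ℝ)/2 - 1) * Real.Gamma ((k:ℝ)/2))) := by
  have hk0 : (0:ℝ) < k := by positivity
  let S : Set (Fin k → ℝ) := {z : Fin k → ℝ | ∑ i, z i ^ 2 ≤ u}
  let f : Finset (Fin k) → (Fin k → ℝ) → ℝ := fun s z => (∏ i ∈ s, z i ^ 2) * Real.exp (-(∑ i, z i ^ 2)/2)
  have hcomp : IsCompact S := by
    apply Metric.isCompact_of_isClosed_isBounded
    · exact isClosed_le (by fun_prop) (by fun_prop)
    · refine (Metric.isBounded_closedBall (x := (0 : Fin k → ℝ)) (r := √u)).subset ?_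
      intro z hz
      rw [mem_closedBall_zero_iff, pi_norm_le_iff_of_nonneg (Real.sqrt_nonneg u)]
      intro i
      apply Real.abs_le_sqrt
      exact (Finset.single_le_sum (f := fun i => z i ^ 2) (fun i _ => sq_nonneg _) (Finset.mem_univ i)).trans hz
  have hint : ∀ s, IntegrableOn (f s) S := by
    intro s
    apply ContinuousOn.integrableOn_compact hcomp
    apply Continuous.continuousOn
    fun_prop
  have e : ∀ z : Fin k → ℝ, (z a^2-1)*(z b^2-1)*(z c^2-1) * Real.exp (-(∑ i, z i^2)/2)
     = f {a, b, c} z - f {a, b} z - f {a, c} z - f {b, c} z + f {a} z + f {b} z + f {c} z - f ∅ z := by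
    intro z
    have h3 : ∏ i ∈ ({a, b, c} : Finset (Fin k)), z i ^ 2 = z a ^ 2 * (z b ^ 2 * z c ^ 2) := by
      rw [Finset.prod_insert (by simp [hab, hac]), Finset.prod_pair hbc]
    simp only [f, h3, Finset.prod_pair hab, Finset.prod_pair hac, Finset.prod_pair hbc, Finset.prod_singleton, Finset.prod_empty]
    ring
  have hmom : ∀ s : Finset (Fin k), ∫ z in S, f s z = (2*π) ^ ((k:ℝ)/2) * (J (k - 1 + 2 * s.card) /
        (2 ^ ((k:ℝ)/2 + s.card - 1) * Real.Gamma ((k:ℝ)/2 + s.card))) := by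
    intro s
    rw [hJ]
    exact moment k hk u hu s
  have I : ∀ s, Integrable (f s) (volume.restrict S) := hint
  simp only [e]
  change ∫ z in S, _ = _
  have i1 := (I {a, b, c}).sub (I {a, b})
  have i2 := i1.sub (I {a, c})
  have i3 := i2.sub (I {b, c})
  have i4 := i3.add (I {a})
  have i5 := i4.add (I {b})
  have i6 := i5.add (I {c})
  have E8 := integral_sub i6 (I ∅)
  have E7 := integral_add i5 (I {c})
  have E6 := integral_add i4 (I {b})
  have E5 := integral_add i3 (I {a})
  have E4 := integral_sub i2 (I {b, c})
  have E3 := integral_sub i1 (I {a, c})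
  have E2 := integral_sub (I {a, b, c}) (I {a, b})
  simp only [Pi.add_apply, Pi.sub_apply] at E2 E3 E4 E5 E6 E7 E8
  rw [E8, E7, E6, E5, E4, E3, E2]
  simp only [hmom]
  have c3 : ({a, b, c} : Finset (Fin k)).card = 3 := by
    rw [Finset.card_insert_of_notMem (by simp [hab, hac]), Finset.card_pair hbc]
  simp only [c3, Finset.card_pair hab, Finset.card_pair hac, Finset.card_pair hbc, Finset.card_singleton, Finset.card_empty]
  have g1 := gamma_step ((k:ℝ)/2) (by positivity)
  have g2 := gamma_step ((k:ℝ)/2+1) (by positivity)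
  have g3 := gamma_step ((k:ℝ)/2+1+1) (by positivity)
  rw [g1] at g2
  rw [g2] at g3
  rw [show (k:ℝ)/2 + ((3:ℕ):ℝ) = (k:ℝ)/2+1+1+1 by push_cast; ring, show (k:ℝ)/2 + ((2:ℕ):ℝ) = (k:ℝ)/2+1+1 by push_cast; ring,
    show (k:ℝ)/2 + ((1:ℕ):ℝ) = (k:ℝ)/2+1 by push_cast; ring, show (k:ℝ)/2 + ((0:ℕ):ℝ) = (k:ℝ)/2 by push_cast; ring, g1, g2, g3]
  have hG : 0 < 2 ^ ((k:ℝ)/2 - 1) * Real.Gamma ((k:ℝ)/2) :=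
    mul_pos (by positivity) (Real.Gamma_pos_of_pos (by positivity))
  generalize 2 ^ ((k:ℝ)/2 - 1) * Real.Gamma ((k:ℝ)/2) = G at hG ⊢
  generalize (2*π) ^ ((k:ℝ)/2) = T
  generalize J (k-1+2*3) = J3
  generalize J (k-1+2*2) = J2
  generalize J (k-1+2*1) = J1
  generalize J (k-1+2*0) = J0
  rw [show 2 * ((k:ℝ)/2) = k by ring, show 2 * ((k:ℝ)/2+1) = k+2 by ring, show 2 * ((k:ℝ)/2+1+1) = k+4 by ring]
  field_simp
  ring

theorem stmt12 (k : ℕ) (hk : 3 ≤ k) (u : ℝ) (hu : 0 < u) :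
    (2 * Real.pi) ^ (-(k : ℝ) / 2) *
        ∫ z in {z : Fin k → ℝ | ∑ i, z i ^ 2 ≤ u},
          iteratedDeriv 2
            (fun w => iteratedDeriv 2
              (fun s => iteratedDeriv 2
                (fun t => Real.exp
                  (-(∑ i, Function.update (Function.update (Function.update z ⟨2, by omega⟩ w) ⟨1, by omega⟩ s) ⟨0, by omega⟩ t i ^ 2) / 2))
                (z ⟨0, by omega⟩))
              (z ⟨1, by omega⟩))
            (z ⟨2, by omega⟩) =
      (-(2 * u / k) + 4 * u ^ 2 / (k * (k + 2)) -
          2 * u ^ 3 / (k * (k + 2) * (k + 4))) *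
        (u ^ ((k : ℝ) / 2 - 1) * Real.exp (-u / 2) /
          (2 ^ ((k : ℝ) / 2) * Real.Gamma ((k : ℝ) / 2))) := by
  simp only [integrand_eq k ⟨0, by omega⟩ ⟨1, by omega⟩ ⟨2, by omega⟩ (by simp) (by simp) (by simp)]
  rw [final_int k hk u hu ⟨0, by omega⟩ ⟨1, by omega⟩ ⟨2, by omega⟩ (by simp) (by simp) (by simp) _ (fun _ => rfl),
    ftc k hk u hu _ (fun _ => rfl), ← mul_assoc, ← Real.rpow_add (by positivity),
    show -(k:ℝ)/2 + (k:ℝ)/2 = 0 by ring, Real.rpow_zero, one_mul, Real.rpow_sub_one (two_ne_zero : (2:ℝ) ≠ 0)]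
  have hG : 0 < Real.Gamma ((k:ℝ)/2) := Real.Gamma_pos_of_pos (by positivity)
  have h2 : (0:ℝ) < 2 ^ ((k:ℝ)/2) := by positivity
  generalize Real.Gamma ((k:ℝ)/2) = G at hG ⊢
  generalize (2:ℝ) ^ ((k:ℝ)/2) = T at h2 ⊢
  generalize (-(2 * u / k) + 4 * u ^ 2 / (k * (k + 2)) - 2 * u ^ 3 / (k * (k + 2) * (k + 4)) : ℝ) = A
  generalize u ^ ((k : ℝ) / 2 - 1) * Real.exp (-u / 2) = B
  field_simp
end
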